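/- arXiv:1608.01551 — 2 statements merged into one kernel-verified Lean document; each statement's English description precedes it below -/
import Mathlib

section
/- Let F be a perfect field and let H be an abelian subgroup of GL_n(F). For each h ∈ H let h = h_s h_u be its multiplicative Jordan–Chevalley decomposition, i.e. h_s, h_u ∈ GL_n(F), h_s is semisimple (diagonalizable over the algebraic closure of F), h_u is unipotent (h_u − 1 is nilpotent), and h_s h_u = h_u h_s. Let ⟨H_s⟩ denote the subgroup of GL_n(F) generated by the set H_s = {h_s : h ∈ H}. Then M_H = M_{⟨H_s⟩} (both sides possibly infinite). Consequently, if H is an abelian subgroup of a subgroup G ≤ GL_n(F), then M_{⟨H_s⟩} ≤ M_G. -/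
open MvPolynomial Matrix

/-- The action of `g ∈ GL_n(F)` on polynomials: `(g · f)(v) = f(g⁻¹ v)`. -/
noncomputable def glAct {n : ℕ} {F : Type} [Field F] (g : GL (Fin n) F)
    (f : MvPolynomial (Fin n) F) : MvPolynomial (Fin n) F :=
  aeval (fun i => ∑ j, ((g⁻¹ : GL (Fin n) F) : Matrix (Fin n) (Fin n) F) i j • X j) f

/-- The minimal positive degree of a nonzero homogeneous `G`-invariant polynomial,
as an element of `ℕ∞` (equal to `⊤` if there is no nonconstant invariant). -/
noncomputable def minDeg {n : ℕ} {F : Type} [Field F]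
    (G : Subgroup (GL (Fin n) F)) : ℕ∞ :=
  sInf {d : ℕ∞ | ∃ m : ℕ, d = (m : ℕ∞) ∧ 0 < m ∧
    ∃ f : MvPolynomial (Fin n) F, f ≠ 0 ∧ f.IsHomogeneous m ∧ ∀ g ∈ G, glAct g f = f}

/-- A matrix in `GL_n(F)` is semisimple if it is diagonalizable over the
algebraic closure of `F`. -/
def IsSemisimpleGL {n : ℕ} {F : Type} [Field F] (u : GL (Fin n) F) : Prop :=
  ∃ (P : GL (Fin n) (AlgebraicClosure F)) (dv : Fin n → AlgebraicClosure F),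
    ((u : Matrix (Fin n) (Fin n) F)).map (algebraMap F (AlgebraicClosure F)) =
      (P : Matrix (Fin n) (Fin n) (AlgebraicClosure F)) * diagonal dv *
        ((P⁻¹ : GL (Fin n) (AlgebraicClosure F)) : Matrix (Fin n) (Fin n) (AlgebraicClosure F))

/-- A matrix in `GL_n(F)` is unipotent if `u - 1` is nilpotent. -/
def IsUnipotentGL {n : ℕ} {F : Type} [Field F] (u : GL (Fin n) F) : Prop :=
  IsNilpotent ((u : Matrix (Fin n) (Fin n) F) - 1)

/-!
Let `T g` be the operator on `F[x₁, …, xₙ]` substituting the linear forms given by the rows of `g`.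
Passing from `h_s` to `h = h_s h_u` does not change generalized eigenspaces: `T h_u` commutes
with `T h_s`, and all polynomials are generalized eigenvectors of `T h_u` for the eigenvalue `1`,
because the variables are and products of generalized eigenvectors of an algebra endomorphism are
generalized eigenvectors. Moreover `T h_s` is diagonalizable over the algebraic closure, so its
generalized `1`-eigenvectors are fixed by it. Hence the invariant forms of degree `d` of `⟨H_s⟩`
are the forms of degree `d` lying in the generalized `1`-eigenspaces of all `T h` with `h ∈ H`.
Commuting operators on a finite-dimensional space with a nonzero common generalized eigenspace have
a common eigenvector there, so `⟨H_s⟩` has a nonzero invariant form of degree `d` exactly when `H`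
does.
-/

open Module.End

section Eigenspaces

variable {R M : Type*} [CommRing R] [AddCommGroup M] [Module R M]

lemma maxGenEigenspace_add_of_commute {f g : Module.End R M} (h : Commute f g)
    (hg : maxGenEigenspace g 0 = ⊤) (μ : R) :
    maxGenEigenspace (f + g) μ = maxGenEigenspace f μ := by
  have hneg : maxGenEigenspace (-g) 0 = ⊤ :=
    top_unique (by simpa [hg] using genEigenspace_le_smul g 0 (-1) ⊤)
  refine le_antisymm ?_ ?_
  · simpa [hneg] using genEigenspace_inf_le_add (f + g) (-g) μ 0 ⊤ ⊤
      (h.add_left (Commute.refl g)).neg_right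
  · simpa [hg] using genEigenspace_inf_le_add f g μ 0 ⊤ ⊤ h

theorem maxGenEigenspace_mul_of_commute {f g : Module.End R M} (h : Commute f g)
    (hg : maxGenEigenspace g 1 = ⊤) (μ : R) :
    maxGenEigenspace (f * g) μ = maxGenEigenspace f μ := by
  have hcomm : Commute f (g - 1) := h.sub_right (Commute.one_right f)
  have hnil : maxGenEigenspace (f * (g - 1)) 0 = ⊤ := by
    refine eq_top_iff.mpr fun x _ ↦ ?_
    obtain ⟨k, hk⟩ : ∃ k : ℕ, ((g - 1) ^ k) x = 0 := by
      simpa using (mem_maxGenEigenspace g 1 x).mp (hg ▸ Submodule.mem_top)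
    exact (mem_maxGenEigenspace _ _ _).mpr ⟨k, by simp [hcomm.mul_pow, hk]⟩
  have hfg : f * g = f + f * (g - 1) := by rw [mul_sub, mul_one, add_sub_cancel]
  rw [hfg, maxGenEigenspace_add_of_commute ((Commute.refl f).mul_right hcomm) hnil]

lemma inf_eigenspace_ne_bot {f : Module.End R M} {p : Submodule R M}
    (hp : p ∈ invtSubmodule f) {μ : R} (h : p ⊓ maxGenEigenspace f μ ≠ ⊥) :
    p ⊓ eigenspace f μ ≠ ⊥ := by
  have hmem : ∀ x ∈ p, f x ∈ p := hp
  have hbot {k : ℕ∞} :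
      p ⊓ genEigenspace f μ k ≠ ⊥ ↔ HasUnifEigenvalue (f.restrict hmem) μ k := by
    rw [p.inf_genEigenspace f hmem]
    exact (Submodule.map_injective_of_injective p.injective_subtype).ne_iff' (Submodule.map_bot _)
  exact hbot.mpr ((hbot.mp h).lt one_pos)

theorem inf_iInf_eigenspace_ne_bot {ι : Type*} {f : ι → Module.End R M} {μ : ι → R}
    (hf : ∀ i j, Commute (f i) (f j)) {p : Submodule R M} [IsArtinian R p]
    (hp : ∀ i, p ∈ invtSubmodule (f i)) (h : p ⊓ ⨅ i, maxGenEigenspace (f i) (μ i) ≠ ⊥) :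
    p ⊓ ⨅ i, eigenspace (f i) (μ i) ≠ ⊥ := by
  have hwf : WellFoundedLT (Set.Iic p) :=
    (Submodule.mapIic p).symm.toOrderEmbedding.wellFoundedLT
  let P : Set.Iic p → Prop := fun q ↦ q.1 ≠ ⊥ ∧ q.1 ≤ ⨅ i, maxGenEigenspace (f i) (μ i) ∧
    ∀ i, q.1 ∈ invtSubmodule (f i)
  have hmaxGen (j : ι) : ⨅ i, maxGenEigenspace (f i) (μ i) ∈ invtSubmodule (f j) :=
    (mem_invtSubmodule_iff_mapsTo _).mpr fun x hx ↦ by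
      simp only [SetLike.mem_coe, Submodule.mem_iInf] at hx ⊢
      exact fun i ↦ mapsTo_maxGenEigenspace_of_comm (hf i j) (μ i) (hx i)
  -- On a minimal invariant submodule each `f i` is scalar: its `μ i`-eigenspace there is nonzero
  -- and, since the operators commute, invariant.
  obtain ⟨q, ⟨hq, hqgen, hqinv⟩, hmin⟩ := exists_minimal_of_wellFoundedLT P
    ⟨⟨_, Set.mem_Iic.mpr inf_le_left⟩, h, inf_le_right,
      fun j ↦ invtSubmodule.inf_mem (hp j) (hmaxGen j)⟩
  have hqeig (i : ι) : q.1 ≤ eigenspace (f i) (μ i) := by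
    have hPi : P ⟨q.1 ⊓ eigenspace (f i) (μ i), Set.mem_Iic.mpr (inf_le_left.trans q.2)⟩ := by
      refine ⟨inf_eigenspace_ne_bot (hqinv i) ?_, inf_le_left.trans hqgen, fun j ↦ ?_⟩
      · rwa [inf_eq_left.mpr (hqgen.trans (iInf_le _ i))]
      · exact invtSubmodule.inf_mem (hqinv j)
          ((mem_invtSubmodule_iff_mapsTo _).mpr (mapsTo_genEigenspace_of_comm (hf i j) (μ i) 1))
    have hle : q.1 ≤ q.1 ⊓ eigenspace (f i) (μ i) :=
      hmin hPi (Subtype.coe_le_coe.mp inf_le_left)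
    exact hle.trans inf_le_right
  exact ne_bot_of_le_ne_bot hq (le_inf q.2 (le_iInf hqeig))

lemma maxGenEigenspace_eq_eigenspace_of_separating {K ι : Type*} [CommRing K] [IsReduced K]
    [Algebra R K] {f : Module.End R M} (c : ι → M →ₗ[R] K) (a : ι → K)
    (hc : ∀ i x, c i (f x) = a i * c i x) (hsep : ∀ x, (∀ i, c i x = 0) → x = 0) (μ : R) :
    maxGenEigenspace f μ = eigenspace f μ := by
  refine le_antisymm (fun x hx ↦ ?_) eigenspace_le_maxGenEigenspace
  have hsub (i : ι) (y : M) : c i ((f - μ • 1) y) = (a i - algebraMap R K μ) * c i y := by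
    simp [hc, sub_mul, Algebra.smul_def]
  have hpow (i : ι) (k : ℕ) : c i (((f - μ • 1) ^ k) x) = (a i - algebraMap R K μ) ^ k * c i x := by
    induction k with
    | zero => simp
    | succ k ih => rw [pow_succ', Module.End.mul_apply, hsub, ih, pow_succ', mul_assoc]
  obtain ⟨k, hk⟩ := (mem_maxGenEigenspace f μ x).mp hx
  suffices (f - μ • 1) x = 0 from mem_eigenspace_iff.mpr (by simpa [sub_eq_zero] using this)
  refine hsep _ fun i ↦ eq_zero_of_pow_eq_zero (n := k + 1) ?_
  have hzero : (a i - algebraMap R K μ) ^ k * c i x = 0 := by rw [← hpow, hk, map_zero]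
  rw [hsub, mul_pow, pow_succ, pow_succ (c i x)]
  linear_combination (a i - algebraMap R K μ) * c i x ^ k * hzero

lemma mem_maxGenEigenspace_of_sub_apply_mem {f : Module.End R M} {μ : R} {x : M}
    (hx : (f - μ • 1) x ∈ maxGenEigenspace f μ) : x ∈ maxGenEigenspace f μ := by
  obtain ⟨k, hk⟩ := (mem_maxGenEigenspace f μ _).mp hx
  exact (mem_maxGenEigenspace f μ x).mpr ⟨k + 1, by rwa [pow_succ, Module.End.mul_apply]⟩

theorem mul_mem_maxGenEigenspace {A : Type*} [Ring A] [Algebra R A] (φ : A →ₐ[R] A)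
    {μ ν : R} {x y : A} (hx : x ∈ maxGenEigenspace φ.toLinearMap μ)
    (hy : y ∈ maxGenEigenspace φ.toLinearMap ν) :
    x * y ∈ maxGenEigenspace φ.toLinearMap (μ * ν) := by
  have hmul (x y : A) : (φ.toLinearMap - (μ * ν) • 1) (x * y) =
      (φ.toLinearMap - μ • 1) x * (φ.toLinearMap - ν • 1) y
        + ν • ((φ.toLinearMap - μ • 1) x * y) + μ • (x * (φ.toLinearMap - ν • 1) y) := by
    simp [sub_mul, mul_sub, mul_smul, smul_sub, smul_comm ν μ]
  obtain ⟨k, hk⟩ := (mem_maxGenEigenspace _ _ _).mp hx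
  clear hx
  induction k generalizing x y with
  | zero => simp [show x = 0 from hk]
  | succ k ihk =>
    rw [pow_succ, Module.End.mul_apply] at hk
    obtain ⟨l, hl⟩ := (mem_maxGenEigenspace _ _ _).mp hy
    induction l generalizing y with
    | zero => simp [show y = 0 from hl]
    | succ l ihl =>
      rw [pow_succ, Module.End.mul_apply] at hl
      have hy' : (φ.toLinearMap - ν • 1) y ∈ maxGenEigenspace φ.toLinearMap ν :=
        (mem_maxGenEigenspace _ _ _).mpr ⟨l, hl⟩
      refine mem_maxGenEigenspace_of_sub_apply_mem (hmul x y ▸ add_mem (add_mem ?_ ?_) ?_)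
      · exact ihk hy' hk
      · exact Submodule.smul_mem _ ν (ihk hy hk)
      · exact Submodule.smul_mem _ μ (ihl hy' hl)

end Eigenspaces

section LinearSubstitution

variable {σ τ υ R : Type*} [Fintype τ] [Fintype υ] [CommRing R]

/-- The linear substitution `f ↦ f ∘ A`, sending the variable `X i` to the linear form given by
the `i`-th row of `A`. It is contravariant in `A`, and `g` acts on polynomials by `linSubst g⁻¹`. -/
noncomputable def linSubst (A : Matrix σ τ R) : MvPolynomial σ R →ₐ[R] MvPolynomial τ R :=
  bind₁ A.toMvPolynomial

@[simp]
lemma linSubst_one [Fintype σ] [DecidableEq σ] (f : MvPolynomial σ R) :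
    linSubst (1 : Matrix σ σ R) f = f := by
  simp [linSubst]

lemma linSubst_linSubst (A : Matrix σ τ R) (B : Matrix τ υ R) (f : MvPolynomial σ R) :
    linSubst B (linSubst A f) = linSubst (A * B) f := by
  rw [linSubst, linSubst, bind₁_bind₁, linSubst, funext (toMvPolynomial_mul A B)]

lemma map_linSubst {S : Type*} [CommRing S] (φ : R →+* S) (A : Matrix σ τ R)
    (f : MvPolynomial σ R) :
    MvPolynomial.map φ (linSubst A f) = linSubst (A.map φ) (MvPolynomial.map φ f) := by
  rw [linSubst, map_bind₁, linSubst, funext (toMvPolynomial_map φ A)]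

lemma isHomogeneous_linSubst (A : Matrix σ τ R) {f : MvPolynomial σ R} {d : ℕ}
    (hf : f.IsHomogeneous d) : (linSubst A f).IsHomogeneous d := by
  simpa [linSubst] using hf.aeval _ (toMvPolynomial_isHomogeneous A)

variable [Fintype σ]

lemma commute_linSubst {A B : Matrix σ σ R} (h : Commute A B) :
    Commute (linSubst A).toLinearMap (linSubst B).toLinearMap :=
  LinearMap.ext fun f ↦ by
    simp only [Module.End.mul_apply, AlgHom.toLinearMap_apply, linSubst_linSubst, h.eq]

variable [DecidableEq σ]

lemma coeff_linSubst_diagonal (a : σ → R) (f : MvPolynomial σ R) (m : σ →₀ ℕ) :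
    coeff m (linSubst (diagonal a) f) = (m.prod fun i k ↦ a i ^ k) * coeff m f := by
  have hX (i : σ) : (diagonal a).toMvPolynomial i = C (a i) * X i := by
    rw [toMvPolynomial, Finset.sum_eq_single i (by simp +contextual [diagonal_apply_ne'])
      (by simp), diagonal_apply_eq, C_mul_X_eq_monomial]
  induction f using MvPolynomial.induction_on' with
  | add p q hp hq => simp [hp, hq, mul_add]
  | monomial u c =>
    have hmon : linSubst (diagonal a) (monomial u c) =
        monomial u ((u.prod fun i k ↦ a i ^ k) * c) := by
      rw [linSubst, bind₁_monomial, monomial_eq]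
      simp only [hX, mul_pow, ← C_pow, Finsupp.prod, Finset.prod_mul_distrib, ← map_prod, C_mul]
      ring
    rw [hmon, coeff_monomial, coeff_monomial]
    split_ifs with h
    · rw [h]
    · rw [mul_zero]

lemma injective_linSubst (P : GL σ R) : Function.Injective (linSubst P.val) :=
  Function.LeftInverse.injective (g := linSubst P⁻¹.val) fun f ↦ by
    rw [linSubst_linSubst, ← Units.val_mul, mul_inv_cancel, Units.val_one, linSubst_one]

theorem maxGenEigenspace_linSubst_one_eq_top {A : Matrix σ σ R} (hA : IsNilpotent (A - 1)) :
    maxGenEigenspace (linSubst A).toLinearMap 1 = ⊤ := by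
  obtain ⟨k, hk⟩ := hA
  have hrow (B : Matrix σ σ R) (i : σ) : ((linSubst A).toLinearMap - 1) (B.toMvPolynomial i) =
      (B * (A - 1)).toMvPolynomial i := by
    have hB : B * A = B * (A - 1) + B := by rw [mul_sub, mul_one, sub_add_cancel]
    simp [linSubst, ← toMvPolynomial_mul, hB, toMvPolynomial_add]
  have hpow (i : σ) (l : ℕ) :
      (((linSubst A).toLinearMap - 1) ^ l) (X i) = ((A - 1) ^ l).toMvPolynomial i := by
    induction l with
    | zero => simp
    | succ l ih => rw [pow_succ', Module.End.mul_apply, ih, hrow, pow_succ]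
  have hX (i : σ) : X i ∈ maxGenEigenspace (linSubst A).toLinearMap (1 : R) :=
    (mem_maxGenEigenspace _ _ _).mpr ⟨k, by simp [hpow, hk]⟩
  refine eq_top_iff.mpr fun f _ ↦ ?_
  induction f using MvPolynomial.induction_on with
  | C a =>
    exact eigenspace_le_maxGenEigenspace (mem_eigenspace_iff.mpr (by simp [linSubst]))
  | add p q hp hq => exact add_mem (hp trivial) (hq trivial)
  | mul_X p i hp => simpa using mul_mem_maxGenEigenspace (linSubst A) (hp trivial) (hX i)

theorem maxGenEigenspace_linSubst_eq_eigenspace {K : Type*} [CommRing K] [IsReduced K]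
    [Algebra R K] [FaithfulSMul R K] {A : Matrix σ σ R} (P : GL σ K) (a : σ → K)
    (hA : A.map (algebraMap R K) * P.val = P.val * diagonal a) (μ : R) :
    maxGenEigenspace (linSubst A).toLinearMap μ = eigenspace (linSubst A).toLinearMap μ := by
  let toK : MvPolynomial σ R →ₗ[R] MvPolynomial σ K :=
    ((linSubst P.val).restrictScalars R).toLinearMap ∘ₗ (mapAlgHom (Algebra.ofId R K)).toLinearMap
  have htoK (f : MvPolynomial σ R) :
      toK f = linSubst P.val (MvPolynomial.map (algebraMap R K) f) := rfl
  have hinj : Function.Injective toK :=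
    (injective_linSubst P).comp (map_injective _ (FaithfulSMul.algebraMap_injective R K))
  have hconj (f : MvPolynomial σ R) : toK (linSubst A f) = linSubst (diagonal a) (toK f) := by
    rw [htoK, htoK, map_linSubst, linSubst_linSubst, hA, linSubst_linSubst]
  refine maxGenEigenspace_eq_eigenspace_of_separating
    (fun m ↦ (lcoeff K m).restrictScalars R ∘ₗ toK) (fun m ↦ m.prod fun i k ↦ a i ^ k)
    (fun m f ↦ ?_) (fun f hf ↦ hinj ?_) μ
  · simp [hconj, coeff_linSubst_diagonal]
  · rw [map_zero]
    exact MvPolynomial.ext _ _ hf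

end LinearSubstitution

section Invariants

variable {n : ℕ} {F : Type} [Field F]

lemma glAct_eq_linSubst (g : GL (Fin n) F) (f : MvPolynomial (Fin n) F) :
    glAct g f = linSubst g⁻¹.val f := by
  have hrow : toMvPolynomial g⁻¹.val = fun i ↦ ∑ j, g⁻¹.val i j • X j := by
    funext i
    simp only [toMvPolynomial, smul_eq_C_mul, C_mul_X_eq_monomial]
  rw [linSubst, hrow]
  rfl

/-- The space `F[x₁, …, xₙ]_d ^ G` of `G`-invariant forms of degree `d`, including zero. Invariance
is encoded by the operators `linSubst g`, that is, by the action of `g⁻¹`, for `g ∈ G`. -/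
noncomputable def invariantForms (G : Subgroup (GL (Fin n) F)) (d : ℕ) :
    Submodule F (MvPolynomial (Fin n) F) :=
  homogeneousSubmodule (Fin n) F d ⊓ ⨅ g : G, eigenspace (linSubst g.1.val).toLinearMap 1

lemma mem_invariantForms {G : Subgroup (GL (Fin n) F)} {d : ℕ} {f : MvPolynomial (Fin n) F} :
    f ∈ invariantForms G d ↔ f.IsHomogeneous d ∧ ∀ g ∈ G, glAct g f = f := by
  have hinv : (∀ g ∈ G, linSubst g.val f = f) ↔ ∀ g ∈ G, glAct g f = f := by
    simp only [glAct_eq_linSubst]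
    exact ⟨fun h g hg ↦ h g⁻¹ (inv_mem hg), fun h g hg ↦ by simpa using h g⁻¹ (inv_mem hg)⟩
  simp [invariantForms, ← hinv]

lemma invariantForms_closure (S : Set (GL (Fin n) F)) (d : ℕ) :
    invariantForms (Subgroup.closure S) d =
      homogeneousSubmodule (Fin n) F d ⊓ ⨅ g ∈ S, eigenspace (linSubst g.val).toLinearMap 1 := by
  ext f
  suffices (∀ g ∈ Subgroup.closure S, linSubst g.val f = f) ↔ ∀ g ∈ S, linSubst g.val f = f by
    simp [invariantForms, this]
  refine ⟨fun h g hg ↦ h g (Subgroup.subset_closure hg), fun h g hg ↦ ?_⟩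
  induction hg using Subgroup.closure_induction with
  | mem g hg => exact h g hg
  | one => simp
  | mul g g' _ _ hg hg' => rw [Units.val_mul, ← linSubst_linSubst, hg, hg']
  | inv g _ hg =>
    conv_lhs => rw [← hg, linSubst_linSubst, ← Units.val_mul, mul_inv_cancel]
    simp

lemma minDeg_eq_sInf_invariantForms (G : Subgroup (GL (Fin n) F)) :
    minDeg G = sInf {d : ℕ∞ | ∃ m : ℕ, d = m ∧ 0 < m ∧ invariantForms G m ≠ ⊥} := by
  simp only [minDeg, Submodule.ne_bot_iff, mem_invariantForms, ← and_assoc, and_comm]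

lemma minDeg_mono {G G' : Subgroup (GL (Fin n) F)} (h : G ≤ G') : minDeg G ≤ minDeg G' := by
  refine sInf_le_sInf ?_
  rintro _ ⟨m, rfl, hm, f, hf, hfm, hfG⟩
  exact ⟨m, rfl, hm, f, hf, hfm, fun g hg ↦ hfG g (h hg)⟩

theorem invariantForms_ne_bot_iff {H : Subgroup (GL (Fin n) F)}
    (hab : ∀ a ∈ H, ∀ b ∈ H, a * b = b * a) (d : ℕ) :
    invariantForms H d ≠ ⊥ ↔ homogeneousSubmodule (Fin n) F d ⊓
      ⨅ h : H, maxGenEigenspace (linSubst h.1.val).toLinearMap 1 ≠ ⊥ := by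
  have : Module.Finite F (homogeneousSubmodule (Fin n) F d) :=
    Module.Finite.iff_fg.mpr (homogeneousSubmodule_fg (Fin n) F d)
  refine ⟨fun h ↦ ne_bot_of_le_ne_bot h ?_, inf_iInf_eigenspace_ne_bot (fun a b ↦ ?_) fun a ↦ ?_⟩
  · exact inf_le_inf_left _ (iInf_mono fun _ ↦ eigenspace_le_maxGenEigenspace)
  · exact commute_linSubst (congrArg Units.val (hab a a.2 b b.2))
  · exact fun f hf ↦ isHomogeneous_linSubst a.1.val hf

theorem eigenspace_linSubst_eq_maxGenEigenspace_mul {s u : GL (Fin n) F} (hs : IsSemisimpleGL s)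
    (hu : IsUnipotentGL u) (hsu : s * u = u * s) :
    eigenspace (linSubst s.val).toLinearMap 1 =
      maxGenEigenspace (linSubst (s * u).val).toLinearMap 1 := by
  obtain ⟨P, a, hP⟩ := hs
  have hmul : (linSubst (s * u).val).toLinearMap =
      (linSubst s.val).toLinearMap * (linSubst u.val).toLinearMap :=
    LinearMap.ext fun f ↦ by simp [hsu, ← linSubst_linSubst]
  rw [hmul, maxGenEigenspace_mul_of_commute (commute_linSubst (congrArg Units.val hsu))
      (maxGenEigenspace_linSubst_one_eq_top hu),
    maxGenEigenspace_linSubst_eq_eigenspace P a (by simp [hP, Matrix.mul_assoc])]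

end Invariants

theorem stmt3_general {n : ℕ} {F : Type} [Field F]
    (H : Subgroup (GL (Fin n) F))
    (hab : ∀ a ∈ H, ∀ b ∈ H, a * b = b * a)
    (hs hu : GL (Fin n) F → GL (Fin n) F)
    (hdecomp : ∀ h ∈ H, h = hs h * hu h)
    (hss : ∀ h ∈ H, IsSemisimpleGL (hs h))
    (huni : ∀ h ∈ H, IsUnipotentGL (hu h))
    (hcomm : ∀ h ∈ H, hs h * hu h = hu h * hs h) :
    minDeg H = minDeg (Subgroup.closure (hs '' (H : Set (GL (Fin n) F)))) ∧
    ∀ G : Subgroup (GL (Fin n) F), H ≤ G →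
      minDeg (Subgroup.closure (hs '' (H : Set (GL (Fin n) F)))) ≤ minDeg G := by
  have heig (h : H) : eigenspace (linSubst (hs h).val).toLinearMap 1 =
      maxGenEigenspace (linSubst h.1.val).toLinearMap 1 := by
    rw [eigenspace_linSubst_eq_maxGenEigenspace_mul (hss h h.2) (huni h h.2) (hcomm h h.2),
      ← hdecomp h h.2]
  have hclosure (d : ℕ) : invariantForms (Subgroup.closure (hs '' H)) d =
      homogeneousSubmodule (Fin n) F d ⊓
        ⨅ h : H, maxGenEigenspace (linSubst h.1.val).toLinearMap 1 := by
    rw [invariantForms_closure, iInf_image, iInf_subtype']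
    exact congrArg _ (iInf_congr heig)
  have heq : minDeg H = minDeg (Subgroup.closure (hs '' H)) := by
    simp only [minDeg_eq_sInf_invariantForms, invariantForms_ne_bot_iff hab, hclosure]
  exact ⟨heq, fun G hHG ↦ heq ▸ minDeg_mono hHG⟩

/-- For a perfect field `F` and an abelian subgroup `H ≤ GL_n(F)`, the minimal degree of
invariants of `H` equals that of the subgroup generated by the semisimple parts of
elements of `H`; consequently `M_{⟨H_s⟩} ≤ M_G` for any subgroup `G` containing `H`. -/
theorem stmt3 {n : ℕ} {F : Type} [Field F] [PerfectField F]
    (H : Subgroup (GL (Fin n) F))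
    (hab : ∀ a ∈ H, ∀ b ∈ H, a * b = b * a)
    (hs hu : GL (Fin n) F → GL (Fin n) F)
    (hdecomp : ∀ h ∈ H, h = hs h * hu h)
    (hss : ∀ h ∈ H, IsSemisimpleGL (hs h))
    (huni : ∀ h ∈ H, IsUnipotentGL (hu h))
    (hcomm : ∀ h ∈ H, hs h * hu h = hu h * hs h) :
    minDeg H = minDeg (Subgroup.closure (hs '' (H : Set (GL (Fin n) F)))) ∧
    ∀ G : Subgroup (GL (Fin n) F), H ≤ G →
      minDeg (Subgroup.closure (hs '' (H : Set (GL (Fin n) F)))) ≤ minDeg G :=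
  stmt3_general H hab hs hu hdecomp hss huni hcomm
end

section
/- Let F be a perfect field, let g ∈ GL_n(F) with g ≠ 1 be of finite order, and suppose the semisimple part g_s of g is diagonalizable over F with eigenvalues ζ^{k_1}, …, ζ^{k_n}, where ζ ∈ F is a primitive k-th root of unity and k is the order of g_s. Define k_g := min{ a_1 + ⋯ + a_n : a_i ∈ ℕ, a_1 + ⋯ + a_n > 0, a_1 k_1 + ⋯ + a_n k_n ≡ 0 (mod k) }. Then M_{⟨g⟩} = k_g. In particular, if G is a finite subgroup of GL_n(F) containing g, then k_g ≤ M_G, i.e. every nonzero homogeneous G-invariant polynomial of positive degree d satisfies d ≥ k_g. -/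
open MvPolynomial Matrix

/-!
The substitution `U` induced by a unipotent matrix is an algebra endomorphism whose generalized
eigenspace for `1` contains the variables. Generalized eigenspaces of an algebra endomorphism
multiply, so that eigenspace is everything: `U - 1` is locally nilpotent. Hence, if `x` commutes
with the unipotent `u` and fixes a nonzero homogeneous `f`, the last nonzero `(U - 1) ^ j f` has the
same degree and is fixed by both `x` and `u`. Taking `x = g` and `x = g_s` shows that `g` and `g_s`
have nonzero homogeneous invariants in the same degrees. In eigencoordinates `g_s` scales each
monomial `X ^ a`, by a factor which is `1` exactly when `k ∣ ∑ a_i k_i`, so these degrees are read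
off from the invariant monomials.
-/

section LinearAlgebra

open Module.End

variable {R A M : Type*} [CommRing R] [Ring A] [Algebra R A] [AddCommGroup M] [Module R M]

lemma mem_genEigenspace_add_one_iff {T : Module.End R M} {μ : R} {k : ℕ} {x : M} :
    x ∈ T.genEigenspace μ (k + 1 : ℕ) ↔ T x - μ • x ∈ T.genEigenspace μ k := by
  simp only [mem_genEigenspace_nat, LinearMap.mem_ker, pow_succ, Module.End.mul_apply,
    LinearMap.sub_apply, LinearMap.smul_apply, Module.End.one_apply]

lemma mul_mem_genEigenspace (φ : A →ₐ[R] A) {μ ν : R} {i j : ℕ} {a b : A}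
    (ha : a ∈ genEigenspace φ.toLinearMap μ i) (hb : b ∈ genEigenspace φ.toLinearMap ν j) :
    a * b ∈ genEigenspace φ.toLinearMap (μ * ν) (i + j : ℕ) := by
  induction i generalizing j a b with
  | zero => simp_all
  | succ i ih =>
    induction j generalizing b with
    | zero => simp_all
    | succ j ihj =>
      have leibniz : φ (a * b) - (μ * ν) • (a * b) =
          (φ a - μ • a) * φ b + μ • (a * (φ b - ν • b)) := by
        simp only [map_mul, sub_mul, mul_sub, smul_sub, smul_mul_assoc, mul_smul_comm, mul_smul]
        abel
      have hφb : φ b ∈ genEigenspace φ.toLinearMap ν (j + 1 : ℕ) :=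
        genEigenspace_mem_invtSubmodule _ _ _ hb
      rw [← add_assoc, mem_genEigenspace_add_one_iff]
      change φ (a * b) - _ ∈ _
      rw [leibniz]
      refine add_mem ?_ (Submodule.smul_mem _ _ ?_)
      · rw [show i + 1 + j = i + (j + 1) by omega]
        exact ih (mem_genEigenspace_add_one_iff.1 ha) hφb
      · exact ihj (mem_genEigenspace_add_one_iff.1 hb)

lemma mul_mem_maxGenEigenspace_s4 (φ : A →ₐ[R] A) {μ ν : R} {a b : A}
    (ha : a ∈ maxGenEigenspace φ.toLinearMap μ) (hb : b ∈ maxGenEigenspace φ.toLinearMap ν) :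
    a * b ∈ maxGenEigenspace φ.toLinearMap (μ * ν) := by
  obtain ⟨i, hi⟩ := (mem_maxGenEigenspace _ _ _).1 ha
  obtain ⟨j, hj⟩ := (mem_maxGenEigenspace _ _ _).1 hb
  exact genEigenspace_le_maximal _ _ _
    (mul_mem_genEigenspace φ (mem_genEigenspace_nat.2 hi) (mem_genEigenspace_nat.2 hj))

lemma exists_hasEigenvector_mem_of_mapsTo {T : Module.End R M} {μ : R} {W : Submodule R M}
    (hW : ∀ y ∈ W, T y ∈ W) {x : M} (hxW : x ∈ W) (hx0 : x ≠ 0)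
    (hx : x ∈ T.maxGenEigenspace μ) : ∃ y ∈ W, T.HasEigenvector μ y := by
  obtain ⟨k, hk⟩ := (mem_maxGenEigenspace _ _ _).1 hx
  have hgen : HasGenEigenvalue (T.restrict hW) μ k := by
    refine (Submodule.ne_bot_iff _).2 ⟨⟨x, hxW⟩, ?_, by simpa using hx0⟩
    rw [genEigenspace_restrict, Submodule.mem_comap]
    exact mem_genEigenspace_nat.2 hk
  obtain ⟨y, hy⟩ := (hasEigenvalue_of_hasGenEigenvalue hgen).exists_hasEigenvector
  exact ⟨y, y.2, hasEigenvector_iff.2 ⟨mem_eigenspace_iff.2 (congrArg Subtype.val hy.apply_eq_smul),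
    fun h => hy.2 (Subtype.ext h)⟩⟩

end LinearAlgebra

section Unipotent

variable {R m : Type*} [Fintype m] [DecidableEq m]

lemma isNilpotent_inv_sub_one [Ring R] {u : Rˣ} (hu : IsNilpotent ((u : R) - 1)) :
    IsNilpotent (((u⁻¹ : Rˣ) : R) - 1) := by
  have h : ((u⁻¹ : Rˣ) : R) - 1 = -(((u⁻¹ : Rˣ) : R) * (u - 1)) := by simp [mul_sub]
  rw [h, isNilpotent_neg_iff]
  exact Commute.isNilpotent_mul_left
    (((Commute.refl u).inv_left.units_val).sub_right (Commute.one_right _)) hu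

lemma isNilpotent_pow_sub_one [Ring R] {u : R} (hu : IsNilpotent (u - 1)) (N : ℕ) :
    IsNilpotent (u ^ N - 1) := by
  rw [← mul_geom_sum]
  exact Commute.isNilpotent_mul_right (Commute.sum_right _ _ _ fun i _ =>
    ((Commute.refl u).sub_left (Commute.one_left u)).pow_right i) hu

lemma isNilpotent_diagonal_iff [CommRing R] [IsReduced R] {c : m → R} :
    IsNilpotent (diagonal c) ↔ c = 0 := by
  rw [← diagonalRingHom_apply, IsNilpotent.map_iff diagonal_injective, isNilpotent_iff_eq_zero]

lemma eq_one_of_eq_conj_diagonal_of_isNilpotent_sub_one [CommRing R] [IsReduced R]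
    {s P : GL m R} {c : m → R}
    (hs : (s : Matrix m m R) = P * diagonal c * (P⁻¹ : GL m R))
    (hnil : IsNilpotent ((s : Matrix m m R) - 1)) : s = 1 := by
  have hconj : diagonal (c - 1) =
      ((P⁻¹ : GL m R) : Matrix m m R) * ((s : Matrix m m R) - 1) * (P : Matrix m m R) := by
    have hsub : diagonal (c - 1) = diagonal c - 1 := by
      rw [← diagonal_one, diagonal_sub]
      rfl
    rw [hs, hsub]
    simp [mul_sub, sub_mul, mul_assoc]
  have hc : c - 1 = 0 := by
    obtain ⟨N, hN⟩ := hnil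
    refine isNilpotent_diagonal_iff.1 ⟨N, ?_⟩
    rw [hconj, Units.conj_pow', hN, mul_zero, zero_mul]
  ext1
  rw [hs, sub_eq_zero.1 hc]
  simp

lemma isOfFinOrder_of_isOfFinOrder_mul [CommRing R] [IsReduced R] {s u P : GL m R} {c : m → R}
    (hs : (s : Matrix m m R) = P * diagonal c * (P⁻¹ : GL m R))
    (hu : IsNilpotent ((u : Matrix m m R) - 1)) (hcomm : Commute s u)
    (hfin : IsOfFinOrder (s * u)) : IsOfFinOrder s := by
  obtain ⟨N, hN, hpow⟩ := isOfFinOrder_iff_pow_eq_one.1 hfin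
  have hsN : s ^ N = u⁻¹ ^ N := by
    rw [inv_pow]
    exact eq_inv_of_mul_eq_one_left (hcomm.mul_pow N ▸ hpow)
  have hdiag : ((s ^ N : GL m R) : Matrix m m R) = P * diagonal (c ^ N) * (P⁻¹ : GL m R) := by
    rw [Units.val_pow_eq_pow_val, hs, Units.conj_pow, diagonal_pow]
  refine isOfFinOrder_iff_pow_eq_one.2
    ⟨N, hN, eq_one_of_eq_conj_diagonal_of_isNilpotent_sub_one hdiag ?_⟩
  rw [hsN, Units.val_pow_eq_pow_val]
  exact isNilpotent_pow_sub_one (isNilpotent_inv_sub_one hu) N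

end Unipotent

section LinearSubstitution

variable {R σ : Type*} [CommRing R] [Fintype σ]

lemma isHomogeneous_bind₁_toMvPolynomial (A : Matrix σ σ R) {f : MvPolynomial σ R} {d : ℕ}
    (hf : f.IsHomogeneous d) : (bind₁ A.toMvPolynomial f).IsHomogeneous d := by
  simpa using hf.aeval _ A.toMvPolynomial_isHomogeneous

variable [DecidableEq σ]

lemma bind₁_sub_one_pow_apply_X (A : Matrix σ σ R) (i : σ) (k : ℕ) :
    (((bind₁ A.toMvPolynomial).toLinearMap - 1) ^ k) (X i) = ((A - 1) ^ k).toMvPolynomial i := by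
  induction k with
  | zero => simp
  | succ k ih =>
    have hsplit : (A - 1) ^ k * A = (A - 1) ^ (k + 1) + (A - 1) ^ k := by
      rw [pow_succ, mul_sub, mul_one, sub_add_cancel]
    rw [pow_succ', Module.End.mul_apply, ih, LinearMap.sub_apply, AlgHom.toLinearMap_apply,
      ← toMvPolynomial_mul, hsplit, toMvPolynomial_add]
    simp

lemma maxGenEigenspace_bind₁_toMvPolynomial_one_eq_top {A : Matrix σ σ R}
    (hA : IsNilpotent (A - 1)) :
    Module.End.maxGenEigenspace (bind₁ A.toMvPolynomial).toLinearMap (1 : R) = ⊤ := by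
  refine (Submodule.eq_top_iff').2 fun f => ?_
  induction f using MvPolynomial.induction_on with
  | C r => exact (Module.End.mem_maxGenEigenspace _ _ _).2 ⟨1, by simp⟩
  | add p q hp hq => exact add_mem hp hq
  | mul_X p i hp =>
    have hX : X i ∈ Module.End.maxGenEigenspace (bind₁ A.toMvPolynomial).toLinearMap (1 : R) := by
      obtain ⟨N, hN⟩ := hA
      refine (Module.End.mem_maxGenEigenspace _ _ _).2 ⟨N, ?_⟩
      rw [one_smul, bind₁_sub_one_pow_apply_X, hN, toMvPolynomial_zero, Pi.zero_apply]
    simpa only [one_mul] using mul_mem_maxGenEigenspace_s4 _ hp hX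

lemma coeff_bind₁_toMvPolynomial_diagonal (c : σ → R) (f : MvPolynomial σ R) (a : σ →₀ ℕ) :
    coeff a (bind₁ (diagonal c).toMvPolynomial f) = (∏ i, c i ^ a i) * coeff a f := by
  have hdiag : (diagonal c).toMvPolynomial = fun i => C (c i) * X i := by
    funext i
    rw [toMvPolynomial, Finset.sum_eq_single i] <;>
      simp +contextual [← C_mul_X_eq_monomial, eq_comm]
  induction f using MvPolynomial.induction_on' with
  | monomial b r =>
    have hmonomial : bind₁ (diagonal c).toMvPolynomial (monomial b r) =
        C (∏ i, c i ^ b i) * monomial b r := by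
      rw [hdiag, ← aeval_eq_bind₁, aeval_monomial, monomial_eq, Finsupp.prod_fintype _ _ (by simp),
        Finsupp.prod_fintype _ _ (by simp)]
      simp only [mul_pow, Finset.prod_mul_distrib, map_prod, map_pow, algebraMap_eq]
      ring
    rw [hmonomial, coeff_C_mul, coeff_monomial]
    split_ifs with h
    · rw [h]
    · simp
  | add p q hp hq => rw [map_add, coeff_add, hp, hq, coeff_add, mul_add]

end LinearSubstitution

section Invariants

variable {n : ℕ} {F : Type} [Field F]

/-- The action `glAct` as a homomorphism to the monoid of algebra endomorphisms, which makes the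
linear algebra of `Module.End` available. Substitution reverses products of matrices, and the
inverse restores their order. -/
noncomputable def glActHom :
    GL (Fin n) F →* (MvPolynomial (Fin n) F →ₐ[F] MvPolynomial (Fin n) F) where
  toFun g := bind₁ ((g⁻¹ : GL (Fin n) F) : Matrix (Fin n) (Fin n) F).toMvPolynomial
  map_one' := by
    ext1 i
    simp
  map_mul' g h := by
    ext1 i
    simp [toMvPolynomial_mul]

lemma glActHom_apply (g : GL (Fin n) F) (f : MvPolynomial (Fin n) F) :
    glActHom g f = glAct g f := by
  have h : ((g⁻¹ : GL (Fin n) F) : Matrix (Fin n) (Fin n) F).toMvPolynomial = fun i =>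
      ∑ j, ((g⁻¹ : GL (Fin n) F) : Matrix (Fin n) (Fin n) F) i j • X j := by
    funext i
    simp only [toMvPolynomial, ← C_mul_X_eq_monomial, smul_eq_C_mul]
  exact congrArg (aeval · f) h

lemma glAct_one (f : MvPolynomial (Fin n) F) : glAct 1 f = f := by
  rw [← glActHom_apply, map_one, AlgHom.one_apply]

lemma glAct_mul (g h : GL (Fin n) F) (f : MvPolynomial (Fin n) F) :
    glAct (g * h) f = glAct g (glAct h f) := by
  simp only [← glActHom_apply, map_mul, AlgHom.mul_apply]

lemma glAct_inv_glAct (g : GL (Fin n) F) (f : MvPolynomial (Fin n) F) :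
    glAct g⁻¹ (glAct g f) = f := by
  rw [← glAct_mul, inv_mul_cancel, glAct_one]

lemma glAct_ne_zero (g : GL (Fin n) F) {f : MvPolynomial (Fin n) F} (hf : f ≠ 0) :
    glAct g f ≠ 0 := by
  intro h
  rw [← glAct_inv_glAct g f, h, ← glActHom_apply, map_zero] at hf
  exact hf rfl

lemma isHomogeneous_glAct (g : GL (Fin n) F) {f : MvPolynomial (Fin n) F} {d : ℕ}
    (hf : f.IsHomogeneous d) : (glAct g f).IsHomogeneous d :=
  glActHom_apply g f ▸ isHomogeneous_bind₁_toMvPolynomial _ hf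

lemma glAct_inv_eq_self {g : GL (Fin n) F} {f : MvPolynomial (Fin n) F} (h : glAct g f = f) :
    glAct g⁻¹ f = f := by
  simpa only [h] using glAct_inv_glAct g f

lemma forall_mem_closure_singleton_glAct_eq_self_iff {g : GL (Fin n) F}
    {f : MvPolynomial (Fin n) F} :
    (∀ x ∈ Subgroup.closure {g}, glAct x f = f) ↔ glAct g f = f := by
  refine ⟨fun h => h g (Subgroup.mem_closure_singleton_self g), fun h x hx => ?_⟩
  induction hx using Subgroup.closure_induction with
  | mem x hx => rwa [Set.mem_singleton_iff.1 hx]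
  | one => exact glAct_one f
  | mul x y _ _ hx hy => rw [glAct_mul, hy, hx]
  | inv x _ hx => exact glAct_inv_eq_self hx

/-- `d` is the degree of a nonzero homogeneous invariant of `g`. The degree `0` is included, so
`M_{⟨g⟩}` is the least positive such `d`. -/
def HasInvariantOfDegree (g : GL (Fin n) F) (d : ℕ) : Prop :=
  ∃ f : MvPolynomial (Fin n) F, f ≠ 0 ∧ f.IsHomogeneous d ∧ glAct g f = f

variable {g s u P D : GL (Fin n) F} {c : Fin n → F} {d : ℕ}

lemma HasInvariantOfDegree.inv (h : HasInvariantOfDegree g d) : HasInvariantOfDegree g⁻¹ d :=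
  let ⟨f, hf0, hfd, hf⟩ := h
  ⟨f, hf0, hfd, glAct_inv_eq_self hf⟩

lemma HasInvariantOfDegree.conj (h : HasInvariantOfDegree g d) (P : GL (Fin n) F) :
    HasInvariantOfDegree (P * g * P⁻¹) d := by
  obtain ⟨f, hf0, hfd, hf⟩ := h
  refine ⟨glAct P f, glAct_ne_zero P hf0, isHomogeneous_glAct P hfd, ?_⟩
  rw [← glAct_mul, inv_mul_cancel_right, glAct_mul, hf]

lemma hasInvariantOfDegree_conj_iff (P : GL (Fin n) F) :
    HasInvariantOfDegree (P * g * P⁻¹) d ↔ HasInvariantOfDegree g d :=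
  ⟨fun h => by simpa [mul_assoc] using h.conj P⁻¹, fun h => h.conj P⟩

lemma exists_common_invariant (hu : IsNilpotent ((u : Matrix (Fin n) (Fin n) F) - 1))
    (hcomm : Commute g u) (h : HasInvariantOfDegree g d) :
    ∃ f : MvPolynomial (Fin n) F,
      f ≠ 0 ∧ f.IsHomogeneous d ∧ glAct g f = f ∧ glAct u f = f := by
  obtain ⟨f, hf0, hfd, hf⟩ := h
  let T : Module.End F (MvPolynomial (Fin n) F) := (glActHom g).toLinearMap
  let U : Module.End F (MvPolynomial (Fin n) F) := (glActHom u).toLinearMap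
  have hTU : Commute T U :=
    LinearMap.ext fun p => DFunLike.congr_fun (hcomm.map glActHom).eq p
  have hW : ∀ p ∈ homogeneousSubmodule (Fin n) F d ⊓ T.eigenspace 1,
      U p ∈ homogeneousSubmodule (Fin n) F d ⊓ T.eigenspace 1 := fun p hp =>
    ⟨isHomogeneous_bind₁_toMvPolynomial _ hp.1,
      Module.End.mapsTo_genEigenspace_of_comm hTU 1 1 hp.2⟩
  have hgen : f ∈ U.maxGenEigenspace 1 := by
    rw [show U.maxGenEigenspace 1 = ⊤ from
      maxGenEigenspace_bind₁_toMvPolynomial_one_eq_top (isNilpotent_inv_sub_one hu)]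
    trivial
  obtain ⟨w, ⟨hwd, hwT⟩, hw⟩ := exists_hasEigenvector_mem_of_mapsTo hW
    ⟨hfd, Module.End.mem_eigenspace_iff.2 (by simpa [T, glActHom_apply] using hf)⟩ hf0 hgen
  refine ⟨w, hw.2, hwd, ?_, ?_⟩
  · simpa [T, glActHom_apply] using Module.End.mem_eigenspace_iff.1 hwT
  · simpa [U, glActHom_apply] using hw.apply_eq_smul

lemma hasInvariantOfDegree_mul_iff (hu : IsNilpotent ((u : Matrix (Fin n) (Fin n) F) - 1))
    (hcomm : Commute s u) : HasInvariantOfDegree (s * u) d ↔ HasInvariantOfDegree s d := by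
  constructor <;> intro h
  · obtain ⟨f, hf0, hfd, hsu, hfu⟩ :=
      exists_common_invariant hu (hcomm.mul_left (Commute.refl u)) h
    exact ⟨f, hf0, hfd, by rwa [glAct_mul, hfu] at hsu⟩
  · obtain ⟨f, hf0, hfd, hfs, hfu⟩ := exists_common_invariant hu hcomm h
    exact ⟨f, hf0, hfd, by rw [glAct_mul, hfu, hfs]⟩

lemma coeff_glAct_inv_of_eq_diagonal (hD : (D : Matrix (Fin n) (Fin n) F) = diagonal c)
    (f : MvPolynomial (Fin n) F) (a : Fin n →₀ ℕ) :
    coeff a (glAct D⁻¹ f) = (∏ i, c i ^ a i) * coeff a f := by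
  rw [← coeff_bind₁_toMvPolynomial_diagonal, ← hD, ← glActHom_apply, glActHom]
  simp

lemma hasInvariantOfDegree_iff_of_eq_diagonal
    (hD : (D : Matrix (Fin n) (Fin n) F) = diagonal c) :
    HasInvariantOfDegree D d ↔ ∃ a : Fin n → ℕ, ∑ i, a i = d ∧ ∏ i, c i ^ a i = 1 := by
  constructor
  · rintro ⟨f, hf0, hfd, hf⟩
    obtain ⟨a, ha⟩ := exists_coeff_ne_zero hf0
    refine ⟨a, ?_, mul_right_cancel₀ ha ?_⟩
    · rw [← Finsupp.degree_eq_sum, Finsupp.degree_eq_weight_one]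
      exact hfd ha
    · rw [one_mul, ← coeff_glAct_inv_of_eq_diagonal hD, glAct_inv_eq_self hf]
  · rintro ⟨a, rfl, hprod⟩
    let b : Fin n →₀ ℕ := Finsupp.equivFunOnFinite.symm a
    have hfix : glAct D⁻¹ (monomial b (1 : F)) = monomial b 1 := by
      ext e
      rw [coeff_glAct_inv_of_eq_diagonal hD, coeff_monomial]
      split_ifs with h
      · subst h
        rw [mul_one]
        exact hprod
      · exact mul_zero _
    have hhom : (monomial b (1 : F)).IsHomogeneous (∑ i, a i) :=
      isHomogeneous_monomial _ (Finsupp.degree_eq_sum b)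
    exact inv_inv D ▸ HasInvariantOfDegree.inv ⟨_, by simp, hhom, hfix⟩

lemma hasInvariantOfDegree_iff_of_eq_conj_diagonal
    (hs : (s : Matrix (Fin n) (Fin n) F) = P * diagonal c * (P⁻¹ : GL (Fin n) F)) :
    HasInvariantOfDegree s d ↔ ∃ a : Fin n → ℕ, ∑ i, a i = d ∧ ∏ i, c i ^ a i = 1 := by
  rw [← hasInvariantOfDegree_conj_iff P⁻¹]
  exact hasInvariantOfDegree_iff_of_eq_diagonal (by simp [hs, mul_assoc])

end Invariants

lemma prod_pow_pow_eq_one_iff_dvd {ι M : Type*} [Fintype ι] [CommMonoid M] {ζ : M} {k : ℕ}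
    (hζ : IsPrimitiveRoot ζ k) (e a : ι → ℕ) :
    ∏ i, (ζ ^ e i) ^ a i = 1 ↔ k ∣ ∑ i, a i * e i := by
  simp only [← pow_mul, Finset.prod_pow_eq_pow_sum, hζ.pow_eq_one_iff_dvd, mul_comm]

lemma exists_pos_sum_eq_and_dvd {ι : Type*} [Fintype ι] [Nonempty ι] {k : ℕ} (hk : k ≠ 0)
    (e : ι → ℕ) : ∃ d, 0 < d ∧ ∃ a : ι → ℕ, ∑ i, a i = d ∧ k ∣ ∑ i, a i * e i := by
  classical
  let i₀ := Classical.arbitrary ι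
  exact ⟨k, hk.bot_lt, Pi.single i₀ k, by simp, by simp [Pi.single_apply]⟩

theorem stmt4_general {n k : ℕ} [NeZero n] [NeZero k] {F : Type} [Field F]
    (s u : GL (Fin n) F) (hcomm : s * u = u * s)
    (hu : IsNilpotent ((u : Matrix (Fin n) (Fin n) F) - 1))
    (ζ : F) (hζ : IsPrimitiveRoot ζ k) (kv : Fin n → ℕ)
    (hdiag : ∃ P : GL (Fin n) F,
      (s : Matrix (Fin n) (Fin n) F) =
        (P : Matrix (Fin n) (Fin n) F) * diagonal (fun i => ζ ^ kv i) *
          ((P⁻¹ : GL (Fin n) F) : Matrix (Fin n) (Fin n) F)) :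
    IsLeast {d : ℕ | 0 < d ∧ ∃ f : MvPolynomial (Fin n) F, f ≠ 0 ∧ f.IsHomogeneous d ∧
        ∀ x ∈ Subgroup.closure {s * u}, glAct x f = f}
      (sInf {d : ℕ | 0 < d ∧ ∃ a : Fin n → ℕ, (∑ i, a i) = d ∧ k ∣ ∑ i, a i * kv i}) ∧
    ∀ G : Subgroup (GL (Fin n) F), s * u ∈ G →
      ∀ d : ℕ, 0 < d →
        ∀ f : MvPolynomial (Fin n) F, f ≠ 0 → f.IsHomogeneous d →
          (∀ x ∈ G, glAct x f = f) →
          sInf {d : ℕ | 0 < d ∧ ∃ a : Fin n → ℕ, (∑ i, a i) = d ∧ k ∣ ∑ i, a i * kv i} ≤ d := by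
  obtain ⟨P, hs⟩ := hdiag
  have key (d : ℕ) : HasInvariantOfDegree (s * u) d ↔
      ∃ a : Fin n → ℕ, ∑ i, a i = d ∧ k ∣ ∑ i, a i * kv i := by
    simp only [hasInvariantOfDegree_mul_iff hu hcomm,
      hasInvariantOfDegree_iff_of_eq_conj_diagonal hs, prod_pow_pow_eq_one_iff_dvd hζ]
  refine ⟨?_, fun G hG d hd f hf0 hfd hf =>
    Nat.sInf_le ⟨hd, (key d).1 ⟨f, hf0, hfd, hf _ hG⟩⟩⟩
  simp only [forall_mem_closure_singleton_glAct_eq_self_iff]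
  change IsLeast {d | 0 < d ∧ HasInvariantOfDegree (s * u) d} _
  simp only [key]
  exact isLeast_csInf (exists_pos_sum_eq_and_dvd (NeZero.ne k) kv)

/-- Let `g ≠ 1` be of finite order in `GL_n(F)` (`F` perfect) with Jordan decomposition
`g = g_s g_u`, where the semisimple part `g_s` is diagonalizable over `F` with eigenvalues
`ζ^{k_1}, …, ζ^{k_n}` (`ζ` a primitive `k`-th root of unity, `k = ord(g_s)`).  Then
`M_{⟨g⟩} = k_g := min{∑ a_i > 0 : ∑ a_i k_i ≡ 0 (mod k)}`, and `k_g ≤ M_G` for every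
finite subgroup `G` containing `g`. -/
theorem stmt4 {n k : ℕ} {F : Type} [Field F] [PerfectField F]
    (g gs gu : GL (Fin n) F) (hg1 : g ≠ 1) (hgfin : IsOfFinOrder g)
    (hdecomp : g = gs * gu)
    (hcomm : gs * gu = gu * gs)
    (huni : IsNilpotent ((gu : Matrix (Fin n) (Fin n) F) - 1))
    (ζ : F) (hζ : IsPrimitiveRoot ζ k) (hk : orderOf gs = k)
    (kv : Fin n → ℕ)
    (hdiag : ∃ P : GL (Fin n) F,
      (gs : Matrix (Fin n) (Fin n) F) =
        (P : Matrix (Fin n) (Fin n) F) * diagonal (fun i => ζ ^ kv i) *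
          ((P⁻¹ : GL (Fin n) F) : Matrix (Fin n) (Fin n) F)) :
    IsLeast {d : ℕ | 0 < d ∧ ∃ f : MvPolynomial (Fin n) F, f ≠ 0 ∧ f.IsHomogeneous d ∧
        ∀ x ∈ Subgroup.closure {g}, glAct x f = f}
      (sInf {d : ℕ | 0 < d ∧ ∃ a : Fin n → ℕ, (∑ i, a i) = d ∧ k ∣ ∑ i, a i * kv i}) ∧
    ∀ G : Subgroup (GL (Fin n) F), (G : Set (GL (Fin n) F)).Finite → g ∈ G →
      ∀ d : ℕ, 0 < d →
        ∀ f : MvPolynomial (Fin n) F, f ≠ 0 → f.IsHomogeneous d →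
          (∀ x ∈ G, glAct x f = f) →
          sInf {d : ℕ | 0 < d ∧ ∃ a : Fin n → ℕ, (∑ i, a i) = d ∧ k ∣ ∑ i, a i * kv i} ≤ d := by
  subst hdecomp
  have : NeZero n := ⟨by rintro rfl; exact hg1 (Subsingleton.elim _ _)⟩
  have : NeZero k := let ⟨_, hs⟩ := hdiag
    ⟨hk ▸ (isOfFinOrder_of_isOfFinOrder_mul hs huni hcomm hgfin).orderOf_pos.ne'⟩
  have general := stmt4_general gs gu hcomm huni ζ hζ kv hdiag
  exact ⟨general.1, fun G _ => general.2 G⟩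
end
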